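/- Let B be a blocking set in a projective plane of order q that does not contain the full point set of any line of the plane. Then |B| ≥ q + √q + 1 (as an inequality of real numbers). -/

import Mathlib

/-!
Let `B` be blocking without containing a line, and let `k l` be the number of points of `B` on the
line `l`. Then `1 ≤ k l`, and also `k l ≤ |B| - q`: choose a point of `l` outside `B`; the `q` other
lines through it contain pairwise disjoint nonempty parts of `B`. Hence the sum of
`(k l - 1) * (|B| - q - k l)` over all lines is nonnegative. Double counting incidences evaluates
`∑ k l` and `∑ (k l)²`, and the sum turns out to be `q * ((|B| - q - 1)² - q)`.
-/

open Configuration Finset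

/-- `B` is a blocking set: it meets every line. The type of lines `L` is explicit because it cannot
be inferred from `B`. -/
def IsBlockingSet {P : Type*} (L : Type*) [Membership P L] (B : Set P) : Prop :=
  ∀ l : L, ∃ p ∈ B, p ∈ l

section Incidence

variable {P L : Type*} [Membership P L] [∀ (p : P) (l : L), Decidable (p ∈ l)]

/-- The number of points of `S` on the line `l`, i.e. the `k` for which `l` is a `k`-secant
of `S`. -/
def secantCard (S : Finset P) (l : L) : ℕ :=
  #{p ∈ S | p ∈ l}

theorem secantCard_erase_add_one [DecidableEq P] {S : Finset P} {p : P} {l : L}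
    (hpS : p ∈ S) (hpl : p ∈ l) : secantCard (S.erase p) l + 1 = secantCard S l := by
  rw [secantCard, filter_erase, card_erase_add_one (mem_filter.2 ⟨hpS, hpl⟩), secantCard]

theorem IsBlockingSet.one_le_secantCard {S : Finset P} (hS : IsBlockingSet L (S : Set P)) (l : L) :
    1 ≤ secantCard S l := by
  obtain ⟨p, hpS, hpl⟩ := hS l
  exact card_pos.2 ⟨p, mem_filter.2 ⟨hpS, hpl⟩⟩

section DoubleCounting

variable [Fintype L]

theorem card_filter_mem_eq_lineCount (p : P) : #{l : L | p ∈ l} = lineCount L p := by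
  rw [lineCount, Nat.card_eq_fintype_card, Fintype.card_subtype]

theorem sum_secantCard_mul {R : Type*} [Semiring R] (S : Finset P) (f : L → R) :
    ∑ l, (secantCard S l : R) * f l = ∑ p ∈ S, ∑ l with p ∈ l, f l := by
  calc ∑ l, (secantCard S l : R) * f l = ∑ l, ∑ p ∈ S with p ∈ l, f l := by
        simp only [sum_const, nsmul_eq_mul, secantCard]
    _ = ∑ p ∈ S, ∑ l with p ∈ l, f l := sum_comm' (by simp [and_comm])

theorem sum_secantCard (S : Finset P) : ∑ l : L, secantCard S l = ∑ p ∈ S, lineCount L p := by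
  simpa [card_filter_mem_eq_lineCount] using sum_secantCard_mul (L := L) S (1 : L → ℕ)

variable [HasLines P L] {S : Finset P} {p : P}

theorem card_filter_mem_and_mem_eq_one {p' : P} (h : p ≠ p') :
    #{l : L | p ∈ l ∧ p' ∈ l} = 1 := by
  rw [card_eq_one_iff_existsUnique]
  simpa using HasLines.existsUnique_line P L p p' h

-- The lines through `p` partition the points other than `p`.
theorem sum_secantCard_through_of_notMem (hp : p ∉ S) :
    ∑ l : L with p ∈ l, secantCard S l = #S := by
  calc ∑ l : L with p ∈ l, secantCard S l = ∑ p' ∈ S, #{l : L | p ∈ l ∧ p' ∈ l} := by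
        simp only [secantCard, ← filter_filter]
        exact sum_card_bipartiteAbove_eq_sum_card_bipartiteBelow fun (l : L) p' ↦ p' ∈ l
    _ = ∑ p' ∈ S, 1 := sum_congr rfl fun p' hp' ↦
        card_filter_mem_and_mem_eq_one (ne_of_mem_of_not_mem hp' hp).symm
    _ = #S := (card_eq_sum_ones S).symm

theorem sum_secantCard_through_add_one_of_mem (hp : p ∈ S) :
    (∑ l : L with p ∈ l, secantCard S l) + 1 = #S + lineCount L p := by
  classical
  have split_off_p : ∑ l : L with p ∈ l, secantCard S l =
      ∑ l : L with p ∈ l, (secantCard (S.erase p) l + 1) :=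
    sum_congr rfl fun l hl ↦ (secantCard_erase_add_one hp (mem_filter.1 hl).2).symm
  rw [split_off_p, sum_add_distrib, sum_secantCard_through_of_notMem (notMem_erase p S),
    ← card_eq_sum_ones, card_filter_mem_eq_lineCount, ← card_erase_add_one hp]
  ring

end DoubleCounting

theorem IsBlockingSet.secantCard_add_lineCount_le [Finite L] [HasLines P L]
    {S : Finset P} (hS : IsBlockingSet L (S : Set P)) {p : P} {l : L} (hpl : p ∈ l) (hpS : p ∉ S) :
    secantCard S l + lineCount L p ≤ #S + 1 := by
  classical
  have := Fintype.ofFinite L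
  have hl : l ∈ ({m : L | p ∈ m} : Finset L) := mem_filter.2 ⟨mem_univ l, hpl⟩
  have other_lines : #(({m : L | p ∈ m} : Finset L).erase l) ≤
      ∑ m ∈ ({m : L | p ∈ m} : Finset L).erase l, secantCard S m := by
    simpa using card_nsmul_le_sum _ (secantCard S) 1 fun m _ ↦ hS.one_le_secantCard m
  have pencil_sum := add_sum_erase _ (secantCard S) hl
  rw [sum_secantCard_through_of_notMem hpS] at pencil_sum
  have pencil_card := card_erase_add_one hl
  rw [card_filter_mem_eq_lineCount] at pencil_card
  omega

section ProjectivePlane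

variable [Finite P] [ProjectivePlane P L]

variable (L) in
theorem sum_secantCard_sq [Fintype L] (S : Finset P) :
    ∑ l : L, secantCard S l ^ 2 = #S * (#S + ProjectivePlane.order P L) := by
  have through_point (p : P) (hp : p ∈ S) :
      ∑ l : L with p ∈ l, secantCard S l = #S + ProjectivePlane.order P L := by
    have := sum_secantCard_through_add_one_of_mem (L := L) hp
    rw [ProjectivePlane.lineCount_eq] at this
    omega
  calc ∑ l : L, secantCard S l ^ 2 = ∑ p ∈ S, ∑ l : L with p ∈ l, secantCard S l := by
        simpa only [sq, Nat.cast_id] using sum_secantCard_mul S (secantCard (L := L) S)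
    _ = #S * (#S + ProjectivePlane.order P L) := by
        rw [sum_congr rfl through_point, sum_const, smul_eq_mul]

variable (L) in
theorem sum_secantCard_sub_one_mul_card_sub_order_sub [Fintype L] (S : Finset P) :
    ∑ l : L, ((secantCard S l : ℤ) - 1) * (#S - ProjectivePlane.order P L - secantCard S l) =
      ProjectivePlane.order P L *
        ((#S - ProjectivePlane.order P L - 1) ^ 2 - ProjectivePlane.order P L) := by
  set q := ProjectivePlane.order P L
  have sum_k : ∑ l : L, (secantCard S l : ℤ) = #S * (q + 1) := by
    have := sum_secantCard (L := L) S
    simp only [ProjectivePlane.lineCount_eq, sum_const, smul_eq_mul] at this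
    exact_mod_cast this
  have sum_k_sq : ∑ l : L, (secantCard S l : ℤ) ^ 2 = #S * (#S + q) := by
    exact_mod_cast sum_secantCard_sq L S
  have card_L : (Fintype.card L : ℤ) = q ^ 2 + q + 1 := by
    exact_mod_cast ProjectivePlane.card_lines P L
  calc ∑ l : L, ((secantCard S l : ℤ) - 1) * (#S - q - secantCard S l)
      = ∑ l : L, (((#S : ℤ) - q + 1) * secantCard S l - (secantCard S l : ℤ) ^ 2 - (#S - q)) :=
        sum_congr rfl fun l _ ↦ by ring
    _ = ((#S : ℤ) - q + 1) * (#S * (q + 1)) - #S * (#S + q) - (q ^ 2 + q + 1) * (#S - q) := by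
        rw [sum_sub_distrib, sum_sub_distrib, ← mul_sum, sum_k, sum_k_sq, sum_const, card_univ,
          nsmul_eq_mul, card_L]
    _ = q * ((#S - q - 1) ^ 2 - q) := by ring

theorem IsBlockingSet.secantCard_add_order_le [Finite L] {S : Finset P}
    (hS : IsBlockingSet L (S : Set P)) {l : L}
    (hl : ¬ {p : P | p ∈ l} ⊆ S) : secantCard S l + ProjectivePlane.order P L ≤ #S := by
  obtain ⟨p, hpl, hpS⟩ := Set.not_subset.1 hl
  have := hS.secantCard_add_lineCount_le hpl hpS
  rw [ProjectivePlane.lineCount_eq] at this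
  omega

end ProjectivePlane

end Incidence

namespace IsBlockingSet

variable {P L : Type*} [Membership P L] [Finite P] [Finite L] [ProjectivePlane P L] {S : Finset P}

theorem order_add_one_le_card (hS : IsBlockingSet L (S : Set P)) {l : L}
    (hl : ¬ {p : P | p ∈ l} ⊆ S) : ProjectivePlane.order P L + 1 ≤ #S := by
  classical
  have := hS.one_le_secantCard l
  have := hS.secantCard_add_order_le hl
  omega

theorem order_le_sq_card_sub_order_sub_one (hS : IsBlockingSet L (S : Set P))
    (hline : ∀ l : L, ¬ {p : P | p ∈ l} ⊆ S) :
    (ProjectivePlane.order P L : ℤ) ≤ (#S - ProjectivePlane.order P L - 1) ^ 2 := by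
  classical
  have := Fintype.ofFinite L
  have sum_products_nonneg : 0 ≤ ∑ l : L,
      ((secantCard S l : ℤ) - 1) * (#S - ProjectivePlane.order P L - secantCard S l) := by
    refine sum_nonneg fun l _ ↦ mul_nonneg ?_ ?_
    · have := hS.one_le_secantCard l
      omega
    · have := hS.secantCard_add_order_le (hline l)
      omega
  rw [sum_secantCard_sub_one_mul_card_sub_order_sub] at sum_products_nonneg
  have order_pos : (0 : ℤ) < ProjectivePlane.order P L := by
    exact_mod_cast zero_lt_one.trans (ProjectivePlane.one_lt_order P L)
  exact sub_nonneg.1 (nonneg_of_mul_nonneg_right sum_products_nonneg order_pos)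

end IsBlockingSet

/-- (Bruen) Let `B` be a blocking set in a projective plane of order `q` that does not contain
the full point set of any line of the plane. Then `|B| ≥ q + √q + 1` as real numbers. -/
theorem statement12 (P L : Type) [Membership P L] [Finite P] [Finite L]
    [Configuration.ProjectivePlane P L] (q : ℕ)
    (horder : Configuration.ProjectivePlane.order P L = q)
    (B : Set P) (hB : ∀ l : L, ∃ p ∈ B, p ∈ l)
    (hline : ∀ l : L, ¬ {p : P | p ∈ l} ⊆ B) :
    (q : ℝ) + Real.sqrt q + 1 ≤ (B.ncard : ℝ) := by
  subst horder
  lift B to Finset P using B.toFinite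
  have hblocking : IsBlockingSet L (B : Set P) := hB
  obtain ⟨-, -, -, l, -⟩ := ProjectivePlane.exists_config (P := P) (L := L)
  have card_ge : (ProjectivePlane.order P L : ℝ) + 1 ≤ #B := by
    exact_mod_cast hblocking.order_add_one_le_card (hline l)
  have order_le : (ProjectivePlane.order P L : ℝ) ≤ (#B - ProjectivePlane.order P L - 1) ^ 2 := by
    exact_mod_cast hblocking.order_le_sq_card_sub_order_sub_one hline
  have sqrt_le : √(ProjectivePlane.order P L : ℝ) ≤ #B - ProjectivePlane.order P L - 1 :=
    Real.sqrt_le_iff.2 ⟨by linarith, order_le⟩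
  rw [Set.ncard_coe_finset]
  linarith
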